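/- (Mountain pass lemma of Ambrosetti–Rabinowitz.) Let I be a C¹-functional defined on a Banach space X. Assume that I satisfies the Palais–Smale condition and that there exist an open set U ⊂ X, u₀ ∈ U, and u₁ ∈ X \ closure(U) such that inf_{u ∈ ∂U} I(u) > max{I(u₀), I(u₁)}. Then I has a critical point at the level c := inf_{γ ∈ Γ} max_{u ∈ γ([0,1])} I(u) ≥ inf_{u ∈ ∂U} I(u), where Γ = {γ ∈ C([0,1],X) : γ(0) = u₀, γ(1) = u₁} is the class of paths in X joining u₀ and u₁. -/

import Mathlib

open Filter Topology Set

noncomputable section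

/-- `I` satisfies the Palais–Smale condition: every sequence along which `I` is bounded and
`I' → 0` in `X*` has a convergent subsequence. -/
def PalaisSmale {X : Type*} [NormedAddCommGroup X] [NormedSpace ℝ X]
    (I : X → ℝ) (I' : X → (X →L[ℝ] ℝ)) : Prop :=
  ∀ s : ℕ → X, (∃ M : ℝ, ∀ j, |I (s j)| ≤ M) →
    Tendsto (fun j => ‖I' (s j)‖) atTop (𝓝 0) →
    ∃ (x : X) (σ : ℕ → ℕ), StrictMono σ ∧ Tendsto (fun j => s (σ j)) atTop (𝓝 x)

/-- The mountain pass level: `c = inf_{γ ∈ Γ} max_{t ∈ [0,1]} I(γ(t))`, where `Γ` is the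
class of continuous paths joining `u₀` and `u₁`. -/
def mountainPassLevel {X : Type*} [NormedAddCommGroup X] [NormedSpace ℝ X]
    (I : X → ℝ) (u₀ u₁ : X) : ℝ :=
  sInf {r : ℝ | ∃ γ : ℝ → X, ContinuousOn γ (Set.Icc 0 1) ∧ γ 0 = u₀ ∧ γ 1 = u₁ ∧
    r = sSup ((fun t => I (γ t)) '' Set.Icc (0:ℝ) 1)}

/-!
The paths joining `u₀` to `u₁` form a closed subset of the Banach space `C([0,1], X)`, and
`γ ↦ max I ∘ γ` is lower semicontinuous and bounded below on it. Ekeland's principle yields paths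
`γ` that almost realise the infimum `c` and along which no admissible perturbation of size `h`
lowers the maximum by more than `ε h`. If `‖I'‖ > ε` held at every maximum point of `I ∘ γ`, a
partition of unity would glue local descent directions to a field along `γ` vanishing at the end
points (where `I < c`), and a small shift along this field would lower the maximum by more than
that. Hence some maximum point is almost critical at a level close to `c`, and letting `ε → 0` the
Palais–Smale condition provides the critical point. The argument works
verbatim with `[0,1]` and its end points replaced by a compact normal space and a closed subset.
-/

section Ekeland

variable {E : Type*} [PseudoMetricSpace E] {Φ : E → ℝ} {ε : ℝ}

/-- The points below `x` in Ekeland's order: moving from `x` to such a point `w` lowers `Φ` by at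
least `ε` times the distance travelled. -/
def ekelandLowerSet (Φ : E → ℝ) (ε : ℝ) (x : E) : Set E :=
  {w | Φ w + ε * dist x w ≤ Φ x}

theorem self_mem_ekelandLowerSet (x : E) : x ∈ ekelandLowerSet Φ ε x := by
  simp [ekelandLowerSet]

theorem le_of_mem_ekelandLowerSet (hε : 0 ≤ ε) {x w : E} (hw : w ∈ ekelandLowerSet Φ ε x) :
    Φ w ≤ Φ x :=
  (le_add_of_nonneg_right (mul_nonneg hε dist_nonneg)).trans hw

theorem ekelandLowerSet_subset (hε : 0 ≤ ε) {x z : E} (hz : z ∈ ekelandLowerSet Φ ε x) :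
    ekelandLowerSet Φ ε z ⊆ ekelandLowerSet Φ ε x := fun w hw =>
  calc
    Φ w + ε * dist x w ≤ Φ w + ε * (dist x z + dist z w) := by
      gcongr
      exact dist_triangle x z w
    _ = (Φ w + ε * dist z w) + ε * dist x z := by ring
    _ ≤ Φ z + ε * dist x z := by
      gcongr
      exact hw
    _ ≤ Φ x := hz

theorem isClosed_ekelandLowerSet (hΦ : LowerSemicontinuous Φ) (x : E) :
    IsClosed (ekelandLowerSet Φ ε x) := by
  have hsum : LowerSemicontinuous fun w => Φ w + ε * dist x w :=
    hΦ.add (Continuous.lowerSemicontinuous (by fun_prop))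
  exact hsum.isClosed_preimage (Φ x)

/-- Passing from `x` to `z` closes at least half of the gap between `Φ x` and the infimum of `Φ`
over the lower set of `x`; this form avoids the infimum. -/
theorem exists_mem_ekelandLowerSet_two_mul_le (hb : BddBelow (range Φ)) (x : E) :
    ∃ z ∈ ekelandLowerSet Φ ε x, ∀ w ∈ ekelandLowerSet Φ ε x, 2 * Φ z ≤ Φ x + Φ w := by
  set m := sInf (Φ '' ekelandLowerSet Φ ε x)
  have hm : ∀ w ∈ ekelandLowerSet Φ ε x, m ≤ Φ w := fun w hw =>
    csInf_le (hb.mono (image_subset_range _ _)) (mem_image_of_mem Φ hw)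
  rcases le_or_gt (Φ x) m with hx | hx
  · exact ⟨x, self_mem_ekelandLowerSet x, fun w hw => by linarith [hm w hw]⟩
  · have hne : (Φ '' ekelandLowerSet Φ ε x).Nonempty :=
      ⟨Φ x, mem_image_of_mem Φ (self_mem_ekelandLowerSet x)⟩
    obtain ⟨_, ⟨z, hz, rfl⟩, hlt⟩ := exists_lt_of_csInf_lt hne (left_lt_add_div_two.2 hx)
    exact ⟨z, hz, fun w hw => by linarith [hm w hw]⟩

theorem exists_seq_ekelandLowerSet (hb : BddBelow (range Φ)) (x : E) :
    ∃ u : ℕ → E, u 0 = x ∧ ∀ n, u (n + 1) ∈ ekelandLowerSet Φ ε (u n) ∧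
      ∀ w ∈ ekelandLowerSet Φ ε (u n), 2 * Φ (u (n + 1)) ≤ Φ (u n) + Φ w := by
  choose f hf using exists_mem_ekelandLowerSet_two_mul_le (ε := ε) hb
  refine ⟨fun n => f^[n] x, rfl, fun n => ?_⟩
  simpa only [Function.iterate_succ_apply'] using hf (f^[n] x)

theorem exists_forall_mem_ekelandLowerSet [CompleteSpace E] (hΦ : LowerSemicontinuous Φ)
    (hb : BddBelow (range Φ)) (hε : 0 < ε) {u : ℕ → E}
    (hu : ∀ n, u (n + 1) ∈ ekelandLowerSet Φ ε (u n)) :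
    ∃ y, ∀ n, y ∈ ekelandLowerSet Φ ε (u n) := by
  have hmem : ∀ n m, n ≤ m → u m ∈ ekelandLowerSet Φ ε (u n) := fun n m hnm =>
    antitone_nat_of_succ_le (f := fun k => ekelandLowerSet Φ ε (u k))
      (fun k => ekelandLowerSet_subset hε.le (hu k)) hnm (self_mem_ekelandLowerSet (u m))
  have hanti : Antitone fun n => Φ (u n) := fun n m hnm =>
    le_of_mem_ekelandLowerSet hε.le (hmem n m hnm)
  have hlim := tendsto_atTop_ciInf hanti (hb.mono (range_comp_subset_range u Φ))
  have hcauchy : CauchySeq u := by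
    refine cauchySeq_of_le_tendsto_0' (fun n => (Φ (u n) - ⨅ k, Φ (u k)) / ε)
      (fun n m hnm => ?_) (by simpa using (hlim.sub_const (⨅ k, Φ (u k))).div_const ε)
    have hle : Φ (u m) + ε * dist (u n) (u m) ≤ Φ (u n) := hmem n m hnm
    rw [le_div_iff₀ hε]
    linarith [hanti.le_of_tendsto hlim m]
  obtain ⟨y, hy⟩ := cauchySeq_tendsto_of_complete hcauchy
  exact ⟨y, fun n => (isClosed_ekelandLowerSet hΦ (u n)).mem_of_tendsto hy
    ((eventually_ge_atTop n).mono (hmem n))⟩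

theorem ekeland_variational_principle [CompleteSpace E] (hΦ : LowerSemicontinuous Φ)
    (hb : BddBelow (range Φ)) (hε : 0 < ε) (x : E) :
    ∃ y ∈ ekelandLowerSet Φ ε x, ∀ z, Φ y ≤ Φ z + ε * dist y z := by
  obtain ⟨u, rfl, hu⟩ := exists_seq_ekelandLowerSet (ε := ε) hb x
  obtain ⟨y, hy⟩ := exists_forall_mem_ekelandLowerSet hΦ hb hε fun n => (hu n).1
  refine ⟨y, hy 0, fun z => ?_⟩
  by_contra! hz
  have hmem : ∀ n, z ∈ ekelandLowerSet Φ ε (u n) := fun n =>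
    ekelandLowerSet_subset hε.le (hy n) hz.le
  have hanti : Antitone fun n => Φ (u n) :=
    antitone_nat_of_succ_le fun n => le_of_mem_ekelandLowerSet hε.le (hu n).1
  have hlim := tendsto_atTop_ciInf hanti (hb.mono (range_comp_subset_range u Φ))
  have hinf_le : 2 * ⨅ n, Φ (u n) ≤ (⨅ n, Φ (u n)) + Φ z :=
    le_of_tendsto_of_tendsto' (((tendsto_add_atTop_iff_nat 1).2 hlim).const_mul 2)
      (hlim.add_const (Φ z)) fun n => (hu n).2 z (hmem n)
  have hle_inf : Φ y ≤ ⨅ n, Φ (u n) := le_ciInf fun n => le_of_mem_ekelandLowerSet hε.le (hy n)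
  linarith [mul_nonneg hε.le (dist_nonneg (x := y) (y := z))]

end Ekeland

section DescentField

variable {X : Type*} [NormedAddCommGroup X] [NormedSpace ℝ X]

theorem exists_norm_le_one_apply_lt_neg (f : X →L[ℝ] ℝ) {δ : ℝ} (hδ : δ < ‖f‖) :
    ∃ v : X, ‖v‖ ≤ 1 ∧ f v < -δ := by
  obtain ⟨v, hv, hfv⟩ := f.exists_lt_apply_of_lt_opNorm hδ
  rcases lt_abs.1 hfv with hpos | hneg
  · exact ⟨-v, by simpa using hv.le, by simpa using hpos⟩
  · exact ⟨v, hv.le, lt_neg_of_lt_neg hneg⟩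

theorem exists_continuousMap_apply_lt_neg {T : Type*} [TopologicalSpace T] [NormalSpace T]
    [ParacompactSpace T] {L : T → X →L[ℝ] ℝ} (hL : Continuous L) {A Z : Set T} (hA : IsClosed A)
    (hZ : IsClosed Z) (hAZ : Disjoint A Z) {δ : ℝ} (hδ : ∀ t ∈ A, δ < ‖L t‖) :
    ∃ v : C(T, X), (∀ t, ‖v t‖ ≤ 1) ∧ (∀ t ∈ A, L t (v t) < -δ) ∧ ∀ t ∈ Z, v t = 0 := by
  let S (t : T) : Set X := {v | ‖v‖ ≤ 1} ∩ ({v | t ∈ A → L t v < -δ} ∩ {v | t ∈ Z → v = 0})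
  have hconv : ∀ t, Convex ℝ (S t) := by
    intro t
    have hball : Convex ℝ {v : X | ‖v‖ ≤ 1} := by
      simpa [Metric.closedBall, dist_zero_right] using convex_closedBall (0 : X) 1
    have hdescent : Convex ℝ {v : X | t ∈ A → L t v < -δ} := by
      by_cases ht : t ∈ A
      · simpa [ht] using convex_halfSpace_lt (L t).toLinearMap.isLinear (-δ)
      · simp [ht, convex_univ]
    have hzero : Convex ℝ {v : X | t ∈ Z → v = 0} := by
      by_cases ht : t ∈ Z <;> simp [ht, convex_univ]
    exact hball.inter (hdescent.inter hzero)
  have hlocal : ∀ t, ∃ v, ∀ᶠ s in 𝓝 t, v ∈ S s := by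
    intro t
    by_cases ht : t ∈ A
    · obtain ⟨v, hv, hLv⟩ := exists_norm_le_one_apply_lt_neg (L t) (hδ t ht)
      have hLvc : Continuous fun s => L s v := hL.clm_apply continuous_const
      refine ⟨v, ?_⟩
      filter_upwards [hLvc.continuousAt.eventually_lt_const hLv,
        hZ.isOpen_compl.mem_nhds (hAZ.notMem_of_mem_left ht)] with s hs hsZ
      exact ⟨hv, fun _ => hs, fun h => absurd h hsZ⟩
    · refine ⟨0, ?_⟩
      filter_upwards [hA.isOpen_compl.mem_nhds ht] with s hsA
      exact ⟨by simp, fun h => absurd h hsA, fun _ => rfl⟩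
  obtain ⟨v, hv⟩ := exists_continuous_forall_mem_convex_of_local_const hconv hlocal
  exact ⟨v, fun t => (hv t).1, fun t => (hv t).2.1, fun t => (hv t).2.2⟩

end DescentField

theorem tendsto_slope_of_hasStrictFDerivAt {𝕜 E F : Type*} [NontriviallyNormedField 𝕜]
    [NormedAddCommGroup E] [NormedSpace 𝕜 E] [NormedAddCommGroup F] [NormedSpace 𝕜 F]
    {f : E → F} {f' : E →L[𝕜] F} {x v : E} (hf : HasStrictFDerivAt f f' x) {α : Type*}
    {l : Filter α} {a w : α → E} {h : α → 𝕜} (ha : Tendsto a l (𝓝 x)) (hw : Tendsto w l (𝓝 v))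
    (hh : Tendsto h l (𝓝[≠] 0)) :
    Tendsto (fun i => (h i)⁻¹ • (f (a i + h i • w i) - f (a i))) l (𝓝 (f' v)) := by
  obtain ⟨hh₀, hne⟩ := tendsto_nhdsWithin_iff.1 hh
  have hshift : Tendsto (fun i => a i + h i • w i) l (𝓝 x) := by
    simpa using ha.add (hh₀.smul hw)
  have hremainder := calc
    (fun i => f (a i + h i • w i) - f (a i) - h i • f' (w i)) =o[l] fun i => h i • w i := by
      simpa [Function.comp_def] using hf.isLittleO.comp_tendsto (hshift.prodMk_nhds ha)
    _ =O[l] fun i => h i := by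
      simpa using (Asymptotics.isBigO_refl h l).smul (hw.isBigO_one 𝕜)
  have hquot : Tendsto (fun i => (h i)⁻¹ • (f (a i + h i • w i) - f (a i) - h i • f' (w i)))
      l (𝓝 0) :=
    hremainder.tendsto_inv_smul_nhds_zero
  have hsum := hquot.add ((f'.continuous.tendsto v).comp hw)
  rw [zero_add] at hsum
  refine hsum.congr' ?_
  filter_upwards [hne] with i hi
  have hi : h i ≠ 0 := hi
  simp [smul_sub, hi]

section Minimax

variable {T X : Type*} [TopologicalSpace T]

section Topological

variable [TopologicalSpace X] {I : X → ℝ}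

/-- The maximum of `I` along `γ : T → X`, written as a real supremum: it has the junk value `0` when
`T` is empty or `I ∘ γ` is unbounded above. -/
def maxAlong (I : X → ℝ) (γ : C(T, X)) : ℝ :=
  ⨆ t, I (γ t)

/-- The class of maps competing in a minimax problem: those with the boundary values of `φ` on
`Z`. Prescribing the boundary values by a map defined on all of `T` makes the class nonempty. -/
def mapsAgreeingOn (φ : C(T, X)) (Z : Set T) : Set C(T, X) :=
  {γ | EqOn γ φ Z}

/-- The minimax value `inf_γ max_T I ∘ γ` over the maps `γ` agreeing with `φ` on `Z`. -/
def minimaxLevel (I : X → ℝ) (φ : C(T, X)) (Z : Set T) : ℝ :=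
  sInf (maxAlong I '' mapsAgreeingOn φ Z)

theorem nonempty_mapsAgreeingOn (φ : C(T, X)) (Z : Set T) : (mapsAgreeingOn φ Z).Nonempty :=
  ⟨φ, eqOn_refl φ Z⟩

theorem isClosed_mapsAgreeingOn [T2Space X] (φ : C(T, X)) (Z : Set T) :
    IsClosed (mapsAgreeingOn φ Z) := by
  simp only [mapsAgreeingOn, EqOn, ofPred_forall]
  exact isClosed_biInter fun t _ => isClosed_eq (continuous_eval_const t) continuous_const

variable [CompactSpace T]

theorem bddAbove_range_comp (hI : Continuous I) (γ : C(T, X)) :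
    BddAbove (range fun t => I (γ t)) :=
  (isCompact_range (hI.comp γ.continuous)).bddAbove

theorem le_maxAlong (hI : Continuous I) (γ : C(T, X)) (t : T) : I (γ t) ≤ maxAlong I γ :=
  le_ciSup (bddAbove_range_comp hI γ) t

theorem exists_eq_maxAlong [Nonempty T] (hI : Continuous I) (γ : C(T, X)) :
    ∃ t, I (γ t) = maxAlong I γ :=
  (isCompact_range (hI.comp γ.continuous)).sSup_mem (range_nonempty _)

theorem lowerSemicontinuous_maxAlong (hI : Continuous I) :
    LowerSemicontinuous fun γ : C(T, X) => maxAlong I γ :=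
  lowerSemicontinuous_ciSup (bddAbove_range_comp hI) fun t =>
    (hI.comp (continuous_eval_const t)).lowerSemicontinuous

theorem bddBelow_maxAlong_image (hI : Continuous I) (φ : C(T, X)) {Z : Set T}
    (hZ : Z.Nonempty) : BddBelow (maxAlong I '' mapsAgreeingOn φ Z) := by
  obtain ⟨t, ht⟩ := hZ
  refine ⟨I (φ t), forall_mem_image.2 fun γ hγ => ?_⟩
  rw [← hγ ht]
  exact le_maxAlong hI γ t

theorem sInf_frontier_le_maxAlong [PreconnectedSpace T] (hI : Continuous I) {U : Set X}
    (hb : BddBelow (I '' frontier U)) (γ : C(T, X)) {s t : T} (hs : γ s ∈ U) (ht : γ t ∉ U) :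
    sInf (I '' frontier U) ≤ maxAlong I γ := by
  obtain ⟨r, hr⟩ : (frontier (γ ⁻¹' U)).Nonempty :=
    nonempty_frontier_iff.2 ⟨⟨s, hs⟩, (ne_univ_iff_exists_notMem _).2 ⟨t, ht⟩⟩
  calc
    sInf (I '' frontier U) ≤ I (γ r) :=
      csInf_le hb (mem_image_of_mem I (γ.continuous.frontier_preimage_subset U hr))
    _ ≤ maxAlong I γ := le_maxAlong hI γ r

end Topological

variable [CompactSpace T] [NormedAddCommGroup X] [NormedSpace ℝ X] {I : X → ℝ}
  {I' : X → (X →L[ℝ] ℝ)}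

theorem eventually_forall_apply_add_smul_lt (hI : ∀ x, HasStrictFDerivAt I (I' x) x)
    (γ v : C(T, X)) {m δ : ℝ} (hm : ∀ t, I (γ t) ≤ m)
    (hv : ∀ t, I (γ t) = m → I' (γ t) (v t) < -δ) :
    ∀ᶠ h in 𝓝[>] (0 : ℝ), ∀ t, I (γ t + h • v t) < m - h * δ := by
  have hIc : Continuous I := continuous_iff_continuousAt.2 fun x => (hI x).continuousAt
  have hlocal : ∀ t, ∀ᶠ p in 𝓝[>] (0 : ℝ) ×ˢ 𝓝 t, I (γ p.2 + p.1 • v p.2) < m - p.1 * δ := by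
    intro t
    have hfst : Tendsto Prod.fst (𝓝[>] (0 : ℝ) ×ˢ 𝓝 t) (𝓝[>] 0) := tendsto_fst
    have hγ : Tendsto (fun p : ℝ × T => γ p.2) (𝓝[>] 0 ×ˢ 𝓝 t) (𝓝 (γ t)) :=
      (γ.continuous.tendsto t).comp tendsto_snd
    have hvt : Tendsto (fun p : ℝ × T => v p.2) (𝓝[>] 0 ×ˢ 𝓝 t) (𝓝 (v t)) :=
      (v.continuous.tendsto t).comp tendsto_snd
    rcases (hm t).lt_or_eq with hlt | heq
    · have hcont : ContinuousAt (fun p : ℝ × T => I (γ p.2 + p.1 • v p.2) + p.1 * δ) (0, t) := by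
        fun_prop
      have hev := hcont.tendsto.eventually_lt_const (u := m) (by simpa using hlt)
      rw [nhds_prod_eq] at hev
      filter_upwards [hev.filter_mono (prod_mono_left _ nhdsWithin_le_nhds)] with p hp
      exact lt_sub_iff_add_lt.2 hp
    · have hslope := tendsto_slope_of_hasStrictFDerivAt (hI (γ t)) hγ hvt
        (hfst.mono_right (nhdsGT_le_nhdsNE 0))
      filter_upwards [hslope.eventually_lt_const (hv t heq),
        hfst.eventually self_mem_nhdsWithin] with p hp hpos
      rw [smul_eq_mul, inv_mul_lt_iff₀ hpos] at hp
      linarith [hm p.2]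
  have hnhds := isCompact_univ.mem_prod_nhdsSet_of_forall fun t _ => hlocal t
  rw [nhdsSet_univ, ← principal_univ] at hnhds
  exact (eventually_prod_principal_iff.1 hnhds).mono fun h hh t => hh t (mem_univ t)

theorem exists_eq_maxAlong_norm_le [NormalSpace T] [Nonempty T]
    (hI : ∀ x, HasStrictFDerivAt I (I' x) x) (hcont : Continuous I') {Z : Set T}
    (hZ : IsClosed Z) {γ : C(T, X)} (hγ : ∀ t ∈ Z, I (γ t) < maxAlong I γ) {ε : ℝ} (hε : 0 ≤ ε)
    (hmin : ∀ η : C(T, X), EqOn η γ Z → maxAlong I γ ≤ maxAlong I η + ε * dist γ η) :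
    ∃ t, I (γ t) = maxAlong I γ ∧ ‖I' (γ t)‖ ≤ ε := by
  have hIc : Continuous I := continuous_iff_continuousAt.2 fun x => (hI x).continuousAt
  by_contra! hlarge
  obtain ⟨v, hv_norm, hv_descent, hv_zero⟩ := exists_continuousMap_apply_lt_neg
    (hcont.comp γ.continuous) (isClosed_eq (hIc.comp γ.continuous) continuous_const) hZ
    (disjoint_left.2 fun t ht htZ => (hγ t htZ).ne ht) hlarge
  obtain ⟨h, hdecrease, hpos⟩ :=
    ((eventually_forall_apply_add_smul_lt hI γ v (le_maxAlong hIc γ) hv_descent).and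
      self_mem_nhdsWithin).exists
  have hpos : 0 < h := hpos
  have hdist : dist γ (γ + h • v) ≤ h := by
    rw [ContinuousMap.dist_le hpos.le]
    intro t
    simpa [norm_smul, abs_of_pos hpos] using mul_le_of_le_one_right hpos.le (hv_norm t)
  obtain ⟨t, ht⟩ := exists_eq_maxAlong hIc (γ + h • v)
  refine lt_irrefl (maxAlong I γ) ?_
  calc
    maxAlong I γ ≤ maxAlong I (γ + h • v) + ε * dist γ (γ + h • v) :=
      hmin _ fun s hs => by simp [hv_zero s hs]
    _ ≤ I (γ t + h • v t) + h * ε := by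
      rw [← ht, mul_comm h]
      gcongr
      rfl
    _ < maxAlong I γ := by linarith [hdecrease t]

variable [CompleteSpace X] [NormalSpace T] [Nonempty T]

theorem exists_almost_critical_near_minimaxLevel (hderiv : ∀ x, HasFDerivAt I (I' x) x)
    (hcont : Continuous I') {φ : C(T, X)} {Z : Set T} (hZ : IsClosed Z)
    (hb : BddBelow (maxAlong I '' mapsAgreeingOn φ Z))
    (hlt : ∀ t ∈ Z, I (φ t) < minimaxLevel I φ Z) {ε : ℝ} (hε : 0 < ε) :
    ∃ x, minimaxLevel I φ Z ≤ I x ∧ I x ≤ minimaxLevel I φ Z + ε ∧ ‖I' x‖ ≤ ε := by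
  have hstrict : ∀ x, HasStrictFDerivAt I (I' x) x := fun x =>
    hasStrictFDerivAt_of_hasFDerivAt_of_continuousAt (.of_forall hderiv) hcont.continuousAt
  have hIc : Continuous I := continuous_iff_continuousAt.2 fun x => (hderiv x).continuousAt
  have : CompleteSpace (mapsAgreeingOn φ Z) := (isClosed_mapsAgreeingOn φ Z).completeSpace_coe
  obtain ⟨_, ⟨γ₀, hγ₀, rfl⟩, hγ₀_lt⟩ := exists_lt_of_csInf_lt
    ((nonempty_mapsAgreeingOn φ Z).image (maxAlong I)) (lt_add_of_pos_right _ hε)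
  obtain ⟨γ, hγγ₀, hγ⟩ := ekeland_variational_principle
    ((lowerSemicontinuous_maxAlong hIc).comp continuous_subtype_val) (image_eq_range _ _ ▸ hb) hε
    (⟨γ₀, hγ₀⟩ : mapsAgreeingOn φ Z)
  have hlevel : minimaxLevel I φ Z ≤ maxAlong I γ.1 := csInf_le hb (mem_image_of_mem _ γ.2)
  have hboundary : ∀ t ∈ Z, I (γ.1 t) < maxAlong I γ.1 := fun t ht => by
    rw [γ.2 ht]
    exact (hlt t ht).trans_le hlevel
  obtain ⟨t, ht, hnorm⟩ := exists_eq_maxAlong_norm_le hstrict hcont hZ hboundary hε.le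
    fun η hη => hγ ⟨η, hη.trans γ.2⟩
  refine ⟨γ.1 t, ht ▸ hlevel, ?_, hnorm⟩
  rw [ht]
  exact (le_of_mem_ekelandLowerSet hε.le hγγ₀).trans hγ₀_lt.le

theorem exists_seq_tendsto_minimaxLevel (hderiv : ∀ x, HasFDerivAt I (I' x) x)
    (hcont : Continuous I') {φ : C(T, X)} {Z : Set T} (hZ : IsClosed Z)
    (hb : BddBelow (maxAlong I '' mapsAgreeingOn φ Z))
    (hlt : ∀ t ∈ Z, I (φ t) < minimaxLevel I φ Z) :
    ∃ s : ℕ → X, Tendsto (fun n => I (s n)) atTop (𝓝 (minimaxLevel I φ Z)) ∧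
      Tendsto (fun n => ‖I' (s n)‖) atTop (𝓝 0) := by
  choose s hlower hupper hnorm using fun n : ℕ =>
    exists_almost_critical_near_minimaxLevel hderiv hcont hZ hb hlt
      (Nat.one_div_pos_of_nat (n := n))
  have hlim : Tendsto (fun n : ℕ => 1 / ((n : ℝ) + 1)) atTop (𝓝 0) :=
    tendsto_one_div_add_atTop_nhds_zero_nat
  refine ⟨s, ?_, squeeze_zero (fun n => norm_nonneg _) hnorm hlim⟩
  exact tendsto_of_tendsto_of_tendsto_of_le_of_le tendsto_const_nhds
    (by simpa using hlim.const_add (minimaxLevel I φ Z)) hlower hupper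

end Minimax

section PalaisSmale

variable {X : Type*} [NormedAddCommGroup X] [NormedSpace ℝ X] {I : X → ℝ}
  {I' : X → (X →L[ℝ] ℝ)} {c : ℝ}

/-- The Palais–Smale condition at level `c`, usually written `(PS)_c`: it only concerns sequences
along which `I` tends to `c`. -/
def PalaisSmaleAt (I : X → ℝ) (I' : X → (X →L[ℝ] ℝ)) (c : ℝ) : Prop :=
  ∀ s : ℕ → X, Tendsto (fun n => I (s n)) atTop (𝓝 c) →
    Tendsto (fun n => ‖I' (s n)‖) atTop (𝓝 0) →
    ∃ (x : X) (σ : ℕ → ℕ), StrictMono σ ∧ Tendsto (fun n => s (σ n)) atTop (𝓝 x)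

theorem PalaisSmale.palaisSmaleAt (hPS : PalaisSmale I I') (c : ℝ) : PalaisSmaleAt I I' c := by
  intro s hI hI'
  obtain ⟨M, hM⟩ := hI.abs.bddAbove_range
  exact hPS s ⟨M, fun n => hM (mem_range_self n)⟩ hI'

theorem PalaisSmaleAt.exists_critical_point (hPS : PalaisSmaleAt I I' c) (hI : Continuous I)
    (hI' : Continuous I') {s : ℕ → X} (hs : Tendsto (fun n => I (s n)) atTop (𝓝 c))
    (hs' : Tendsto (fun n => ‖I' (s n)‖) atTop (𝓝 0)) : ∃ x, I' x = 0 ∧ I x = c := by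
  obtain ⟨x, σ, hσ, hx⟩ := hPS s hs hs'
  refine ⟨x, norm_eq_zero.1 ?_, ?_⟩
  · exact tendsto_nhds_unique ((hI'.norm.tendsto x).comp hx) (hs'.comp hσ.tendsto_atTop)
  · exact tendsto_nhds_unique ((hI.tendsto x).comp hx) (hs.comp hσ.tendsto_atTop)

theorem exists_critical_point_minimaxLevel [CompleteSpace X] {T : Type*} [TopologicalSpace T]
    [CompactSpace T] [NormalSpace T] [Nonempty T] (hderiv : ∀ x, HasFDerivAt I (I' x) x)
    (hcont : Continuous I') {φ : C(T, X)} {Z : Set T}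
    (hPS : PalaisSmaleAt I I' (minimaxLevel I φ Z)) (hZ : IsClosed Z)
    (hb : BddBelow (maxAlong I '' mapsAgreeingOn φ Z))
    (hlt : ∀ t ∈ Z, I (φ t) < minimaxLevel I φ Z) :
    ∃ x, I' x = 0 ∧ I x = minimaxLevel I φ Z := by
  have hIc : Continuous I := continuous_iff_continuousAt.2 fun x => (hderiv x).continuousAt
  obtain ⟨s, hs, hs'⟩ := exists_seq_tendsto_minimaxLevel hderiv hcont hZ hb hlt
  exact hPS.exists_critical_point hIc hcont hs hs'

end PalaisSmale

section MountainPass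

variable {X : Type*} [NormedAddCommGroup X] [NormedSpace ℝ X] {I : X → ℝ} {u₀ u₁ : X}

theorem mem_mapsAgreeingOn_segment {γ : C(unitInterval, X)} :
    γ ∈ mapsAgreeingOn (Path.segment u₀ u₁ : C(unitInterval, X)) {0, 1} ↔
      γ 0 = u₀ ∧ γ 1 = u₁ := by
  simp [mapsAgreeingOn, EqOn]

theorem mountainPassLevel_eq_minimaxLevel (I : X → ℝ) (u₀ u₁ : X) :
    mountainPassLevel I u₀ u₁ =
      minimaxLevel I (Path.segment u₀ u₁ : C(unitInterval, X)) {0, 1} := by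
  refine congrArg sInf (Subset.antisymm ?_ ?_)
  · rintro _ ⟨γ, hγ, h₀, h₁, rfl⟩
    refine ⟨⟨fun t => γ t, continuousOn_iff_continuous_domRestrict.1 hγ⟩,
      mem_mapsAgreeingOn_segment.2 ⟨h₀, h₁⟩, ?_⟩
    rw [sSup_image']
    rfl
  · rintro _ ⟨γ, hγ, rfl⟩
    obtain ⟨h₀, h₁⟩ := mem_mapsAgreeingOn_segment.1 hγ
    refine ⟨IccExtend zero_le_one γ, γ.continuous.Icc_extend'.continuousOn,
      (IccExtend_left _ _).trans h₀, (IccExtend_right _ _).trans h₁, ?_⟩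
    rw [sSup_image']
    exact iSup_congr fun t => by rw [IccExtend_val]

theorem sInf_frontier_le_mountainPassLevel (hI : Continuous I) {U : Set X} (hu₀ : u₀ ∈ U)
    (hu₁ : u₁ ∉ U) (hb : BddBelow (I '' frontier U)) :
    sInf (I '' frontier U) ≤ mountainPassLevel I u₀ u₁ := by
  rw [mountainPassLevel_eq_minimaxLevel]
  refine le_csInf ((nonempty_mapsAgreeingOn _ _).image _) (forall_mem_image.2 fun γ hγ => ?_)
  obtain ⟨h₀, h₁⟩ := mem_mapsAgreeingOn_segment.1 hγ
  exact sInf_frontier_le_maxAlong hI hb γ (h₀ ▸ hu₀) (h₁ ▸ hu₁)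

theorem mountain_pass_general [CompleteSpace X] {I' : X → (X →L[ℝ] ℝ)}
    (hderiv : ∀ x, HasFDerivAt I (I' x) x) (hcont : Continuous I')
    (hPS : PalaisSmaleAt I I' (mountainPassLevel I u₀ u₁))
    (hlt : max (I u₀) (I u₁) < mountainPassLevel I u₀ u₁) :
    ∃ x, I' x = 0 ∧ I x = mountainPassLevel I u₀ u₁ := by
  have hIc : Continuous I := continuous_iff_continuousAt.2 fun x => (hderiv x).continuousAt
  rw [mountainPassLevel_eq_minimaxLevel] at hPS hlt ⊢
  refine exists_critical_point_minimaxLevel hderiv hcont hPS (toFinite _).isClosed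
    (bddBelow_maxAlong_image hIc _ (insert_nonempty _ _)) ?_
  simpa using max_lt_iff.1 hlt

end MountainPass

/-- **Lemma 2.4** (Mountain pass lemma of Ambrosetti–Rabinowitz). Let `I` be a `C¹`
functional on a Banach space `X` satisfying the Palais–Smale condition.  If `U ⊆ X` is open,
`u₀ ∈ U`, `u₁ ∉ closure U` and `inf_{∂U} I > max{I(u₀), I(u₁)}`, then `I` has a critical
point at the level `c = inf_{γ ∈ Γ} max_{γ([0,1])} I ≥ inf_{∂U} I`. -/
theorem mountain_pass {X : Type*} [NormedAddCommGroup X] [NormedSpace ℝ X] [CompleteSpace X]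
    (I : X → ℝ) (I' : X → (X →L[ℝ] ℝ))
    (hderiv : ∀ x, HasFDerivAt I (I' x) x) (hcont : Continuous I')
    (hPS : PalaisSmale I I')
    (U : Set X) (hU : IsOpen U) (u₀ u₁ : X) (hu₀ : u₀ ∈ U) (hu₁ : u₁ ∉ closure U)
    (hbdd : BddBelow (I '' frontier U))
    (hgap : max (I u₀) (I u₁) < sInf (I '' frontier U)) :
    ∃ x : X, I' x = 0 ∧ I x = mountainPassLevel I u₀ u₁ ∧
      sInf (I '' frontier U) ≤ mountainPassLevel I u₀ u₁ := by
  have hIc : Continuous I := continuous_iff_continuousAt.2 fun x => (hderiv x).continuousAt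
  have hlevel : sInf (I '' frontier U) ≤ mountainPassLevel I u₀ u₁ :=
    sInf_frontier_le_mountainPassLevel hIc hu₀ (fun h => hu₁ (subset_closure h)) hbdd
  obtain ⟨x, hcrit, hx⟩ :=
    mountain_pass_general hderiv hcont (hPS.palaisSmaleAt _) (hgap.trans_le hlevel)
  exact ⟨x, hcrit, hx, hlevel⟩

end
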